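/- Let c satisfy [H1] and [H2], let k ∈ ℝ, k ≠ 0, and let u₁ be the Jost solution from +∞ at k (which is nowhere vanishing). Then for every x ∈ ℝ, Re( u₁'(x) / (i k u₁(x)) ) = 1/|u₁(x)|². -/

import Mathlib

open MeasureTheory Filter Topology

noncomputable section

/-- Hypothesis [H1]: `c` is essentially bounded below away from `0` and bounded above. -/
def HypH1 (c : ℝ → ℝ) : Prop :=
  ∃ c₀ > (0 : ℝ), ∃ cM > (0 : ℝ), ∀ᵐ x : ℝ, c₀ < c x ∧ c x ≤ cM

/-- Hypothesis [H1] with explicit constants `c₀`, `cM`. -/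
def HypH1c (c : ℝ → ℝ) (c₀ cM : ℝ) : Prop :=
  0 < c₀ ∧ 0 < cM ∧ ∀ᵐ x : ℝ, c₀ < c x ∧ c x ≤ cM

/-- Hypothesis [H2]: `|c(x) - 1| ≤ C ⟨x⟩^{-1-δ}` almost everywhere. -/
def HypH2 (c : ℝ → ℝ) : Prop :=
  ∃ C > (0 : ℝ), ∃ δ > (0 : ℝ),
    ∀ᵐ x : ℝ, |c x - 1| ≤ C * (1 + x ^ 2) ^ (-(1 + δ) / 2)

/-- `u` is continuously differentiable, its derivative is locally absolutely continuous,
and `u'' + (k²/c²) u = 0` holds almost everywhere (equivalently, the integral formulation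
of the second-order equation holds). -/
def SolvesHelmholtz (c : ℝ → ℝ) (k : ℂ) (u : ℝ → ℂ) : Prop :=
  ContDiff ℝ 1 u ∧
  ∀ a b : ℝ, deriv u b = deriv u a + ∫ x in a..b, -(k ^ 2 / ((c x : ℂ) ^ 2)) * u x

/-- The Jost solution from `+∞` at `k` : `e^{-ikx} u(x) → 1` as `x → +∞`. -/
def IsJostPlus (c : ℝ → ℝ) (k : ℂ) (u : ℝ → ℂ) : Prop :=
  SolvesHelmholtz c k u ∧
  Tendsto (fun x : ℝ => Complex.exp (-(Complex.I * k * (x : ℂ))) * u x) atTop (𝓝 1)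

/-- The Jost solution from `-∞` at `k` : `e^{ikx} u(x) → 1` as `x → -∞`. -/
def IsJostMinus (c : ℝ → ℝ) (k : ℂ) (u : ℝ → ℂ) : Prop :=
  SolvesHelmholtz c k u ∧
  Tendsto (fun x : ℝ => Complex.exp (Complex.I * k * (x : ℂ)) * u x) atBot (𝓝 1)

/-- `q = 1 - 1/c²`. -/
def qfun (c : ℝ → ℝ) (x : ℝ) : ℝ := 1 - 1 / (c x) ^ 2

/-- `Q = 1 - 1/c`. -/
def Qfun (c : ℝ → ℝ) (x : ℝ) : ℝ := 1 - 1 / c x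

/-!
The equation is `u'' = V u` with `V = -k²/c²` real and locally integrable, so both `u` and its
conjugate solve it and their Wronskian `2i Im(ū u')` is constant. Its value is found at `+∞`
without any information on `u'` there: the function `e^{-ikx} u` converges to `1`, so its phase
converges, while the derivative of this phase, `Im(ū u') / |u|² - k`, converges to `Im(ū u') - k`.
A convergent function whose derivative converges has derivative tending to `0`, so `Im(ū u') = k`.
-/

/-- The one-dimensional Schrödinger equation `u'' = V u` at zero energy, with a potential `V` that
need not be continuous: `u` is `C¹` and `u'` is an antiderivative of `V u`. -/
def SolvesSchrodinger (V u : ℝ → ℂ) : Prop :=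
  ContDiff ℝ 1 u ∧ ∀ a b : ℝ, deriv u b = deriv u a + ∫ x in a..b, V x * u x

/-- The Wronskian `u v' - u' v`. -/
def wronskian (u v : ℝ → ℂ) (x : ℝ) : ℂ := u x * deriv v x - deriv u x * v x

theorem absolutelyContinuousOnInterval_of_dist_le {X Y : Type*} [PseudoMetricSpace X]
    [PseudoMetricSpace Y] {f : ℝ → X} {g : ℝ → Y} {a b : ℝ}
    (hg : AbsolutelyContinuousOnInterval g a b)
    (hfg : ∀ x ∈ Set.uIcc a b, ∀ y ∈ Set.uIcc a b, dist (f x) (f y) ≤ dist (g x) (g y)) :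
    AbsolutelyContinuousOnInterval f a b := by
  rw [absolutelyContinuousOnInterval_iff] at hg ⊢
  intro ε hε
  obtain ⟨δ, hδ, hgδ⟩ := hg ε hε
  refine ⟨δ, hδ, fun I hI hIδ ↦ (Finset.sum_le_sum fun i hi ↦ ?_).trans_lt (hgδ I hI hIδ)⟩
  exact hfg _ (hI.1 i hi).1 _ (hI.1 i hi).2

theorem absolutelyContinuousOnInterval_intervalIntegral {E : Type*} [NormedAddCommGroup E]
    [NormedSpace ℝ E] {f : ℝ → E} (hf : LocallyIntegrable f) (a b c : ℝ) :
    AbsolutelyContinuousOnInterval (fun x ↦ ∫ t in c..x, f t) a b := by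
  have hint : ∀ y z : ℝ, IntervalIntegrable f volume y z := fun y z ↦
    (hf.integrableOn_isCompact isCompact_uIcc).intervalIntegrable
  refine absolutelyContinuousOnInterval_of_dist_le
    ((hint a b).norm.absolutelyContinuousOnInterval_intervalIntegral Set.left_mem_uIcc)
    fun x _ y _ ↦ ?_
  rw [dist_eq_norm, dist_eq_norm,
    intervalIntegral.integral_interval_sub_left (hint c x) (hint c y),
    intervalIntegral.integral_interval_sub_left (hint a x).norm (hint a y).norm, Real.norm_eq_abs]
  exact intervalIntegral.norm_integral_le_abs_integral_norm

theorem eq_zero_of_tendsto_of_tendsto_deriv {E : Type*} [NormedAddCommGroup E] [NormedSpace ℝ E]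
    {f f' : ℝ → E} {l l' : E} (hf : ∀ᶠ x in atTop, HasDerivAt f (f' x) x)
    (hl : Tendsto f atTop (𝓝 l)) (hl' : Tendsto f' atTop (𝓝 l')) : l' = 0 := by
  refine norm_le_zero_iff.1 (le_of_forall_pos_le_add fun ε hε ↦ ?_)
  rw [zero_add]
  have hshift : Tendsto (fun x ↦ ‖f (x + 1) - f x - l'‖) atTop (𝓝 ‖l'‖) := by
    simpa using (((hl.comp (tendsto_atTop_add_const_right atTop 1 tendsto_id)).sub hl).sub_const
      l').norm
  refine le_of_tendsto hshift ?_
  have hclose : ∀ᶠ x in atTop, ‖f' x - l'‖ ≤ ε :=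
    ((tendsto_iff_norm_sub_tendsto_zero.1 hl').eventually_lt_const hε).mono fun _ ↦ le_of_lt
  filter_upwards [eventually_forall_ge_atTop.2 (hf.and hclose)] with x hx
  have hmv := norm_image_sub_le_of_norm_deriv_le_segment'
    (f := fun y ↦ f y - y • l') (a := x) (b := x + 1) (C := ε)
    (fun y hy ↦ ((hx y hy.1).1.sub ((hasDerivAt_id y).smul_const l')).hasDerivWithinAt)
    (fun y hy ↦ by simpa using (hx y hy.1).2) (x + 1) (by simp)
  calc ‖f (x + 1) - f x - l'‖ = ‖f (x + 1) - (x + 1) • l' - (f x - x • l')‖ := by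
        congr 1; module
    _ ≤ ε := by simpa using hmv

theorem eq_zero_of_tendsto_im_logDeriv {v v' : ℝ → ℂ} {a : ℂ} {w : ℝ} (ha : a ≠ 0)
    (hv : ∀ᶠ x in atTop, HasDerivAt v (v' x) x) (hva : Tendsto v atTop (𝓝 a))
    (hw : Tendsto (fun x ↦ (v' x / v x).im) atTop (𝓝 w)) : w = 0 := by
  have hdiv : Tendsto (fun x ↦ v x / a) atTop (𝓝 1) := by simpa [ha] using hva.div_const a
  have hslit : ∀ᶠ x in atTop, v x / a ∈ Complex.slitPlane :=
    hdiv.eventually (Complex.isOpen_slitPlane.mem_nhds Complex.one_mem_slitPlane)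
  have hlog : Tendsto (fun x ↦ (Complex.log (v x / a)).im) atTop (𝓝 0) := by
    simpa [Function.comp_def] using
      (Complex.continuous_im.tendsto _).comp (hdiv.clog Complex.one_mem_slitPlane)
  refine eq_zero_of_tendsto_of_tendsto_deriv ?_ hlog hw
  filter_upwards [hv, hslit] with x hx hxa
  have h := Complex.imCLM.hasFDerivAt.comp_hasDerivAt x ((hx.div_const a).clog_real hxa)
  rwa [div_div_div_cancel_right₀ ha] at h

theorem im_div_eq_im_conj_mul_div_norm_sq (z w : ℂ) :
    (z / w).im = (starRingEnd ℂ w * z).im / ‖w‖ ^ 2 := by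
  rw [Complex.div_im, Complex.normSq_eq_norm_sq, ← sub_div]
  simp only [Complex.mul_im, Complex.conj_re, Complex.conj_im]
  ring

theorem im_conj_mul_deriv_eq_of_tendsto {u u' : ℝ → ℂ} {a : ℂ} {k w : ℝ} (ha : a ≠ 0)
    (hu : ∀ᶠ x in atTop, HasDerivAt u (u' x) x)
    (hw : ∀ᶠ x in atTop, (starRingEnd ℂ (u x) * u' x).im = w)
    (hua : Tendsto (fun x : ℝ ↦ Complex.exp (-(Complex.I * k * x)) * u x) atTop (𝓝 a)) :
    w = k * ‖a‖ ^ 2 := by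
  set e : ℝ → ℂ := fun x ↦ Complex.exp (-(Complex.I * k * x))
  have hderiv : ∀ᶠ x in atTop,
      HasDerivAt (fun y ↦ e y * u y) (e x * (u' x - Complex.I * k * u x)) x := by
    filter_upwards [hu] with x hx
    have hex : HasDerivAt e (e x * -(Complex.I * k)) x := by
      simpa using ((hasDerivAt_id x).ofReal_comp.const_mul (Complex.I * k)).neg.cexp
    exact (hex.mul hx).congr_deriv (by ring)
  have hnorm : Tendsto (fun x ↦ ‖u x‖) atTop (𝓝 ‖a‖) := by
    simpa [Complex.norm_exp] using hua.norm
  have hphase : ∀ᶠ x in atTop, w / ‖u x‖ ^ 2 - k =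
      (e x * (u' x - Complex.I * k * u x) / (e x * u x)).im := by
    filter_upwards [hw, hnorm.eventually_ne (norm_ne_zero_iff.2 ha)] with x hwx hux
    rw [mul_div_mul_left _ _ (Complex.exp_ne_zero _), sub_div,
      mul_div_cancel_right₀ _ (norm_ne_zero_iff.1 hux), Complex.sub_im,
      im_div_eq_im_conj_mul_div_norm_sq, hwx]
    simp
  have ha2 : ‖a‖ ^ 2 ≠ 0 := pow_ne_zero 2 (norm_ne_zero_iff.2 ha)
  have hlim : Tendsto (fun x ↦ w / ‖u x‖ ^ 2 - k) atTop (𝓝 (w / ‖a‖ ^ 2 - k)) :=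
    (tendsto_const_nhds.div (hnorm.pow 2) ha2).sub_const k
  have hzero := eq_zero_of_tendsto_im_logDeriv ha hderiv hua (hlim.congr' hphase)
  rwa [sub_eq_zero, div_eq_iff ha2] at hzero

theorem deriv_conj (u : ℝ → ℂ) :
    deriv (fun x ↦ starRingEnd ℂ (u x)) = fun x ↦ starRingEnd ℂ (deriv u x) :=
  deriv.star'

theorem wronskian_conj_self (u : ℝ → ℂ) (x : ℝ) :
    wronskian (fun y ↦ starRingEnd ℂ (u y)) u x =
      (2 * (starRingEnd ℂ (u x) * deriv u x).im : ℝ) * Complex.I := by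
  rw [← Complex.sub_conj, wronskian, deriv_conj, map_mul, Complex.conj_conj,
    mul_comm (u x)]

namespace SolvesSchrodinger

variable {V u v : ℝ → ℂ}

theorem hasDerivAt (hu : SolvesSchrodinger V u) (x : ℝ) : HasDerivAt u (deriv u x) x :=
  (hu.1.differentiable one_ne_zero x).hasDerivAt

theorem locallyIntegrable_mul (hu : SolvesSchrodinger V u) (hV : LocallyIntegrable V) :
    LocallyIntegrable (fun x ↦ V x * u x) :=
  hV.mul_continuous hu.1.continuous

theorem absolutelyContinuousOnInterval_deriv (hu : SolvesSchrodinger V u)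
    (hV : LocallyIntegrable V) (a b : ℝ) : AbsolutelyContinuousOnInterval (deriv u) a b := by
  refine absolutelyContinuousOnInterval_of_dist_le
    (absolutelyContinuousOnInterval_intervalIntegral (hu.locallyIntegrable_mul hV) a b 0)
    fun x _ y _ ↦ ?_
  rw [hu.2 0 x, hu.2 0 y, dist_add_left]

theorem ae_hasDerivAt_deriv (hu : SolvesSchrodinger V u) (hV : LocallyIntegrable V) :
    ∀ᵐ x, HasDerivAt (deriv u) (V x * u x) x := by
  filter_upwards [_root_.LocallyIntegrable.ae_hasDerivAt_integral
    (hu.locallyIntegrable_mul hV)] with x hx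
  rw [funext (hu.2 0)]
  exact (hx 0).const_add _

theorem wronskian_eq (hu : SolvesSchrodinger V u) (hv : SolvesSchrodinger V v)
    (hV : LocallyIntegrable V) (x y : ℝ) : wronskian u v x = wronskian u v y := by
  have hac : AbsolutelyContinuousOnInterval (wronskian u v) x y :=
    (hu.1.contDiffOn.absolutelyContinuousOnInterval.smul
      (hv.absolutelyContinuousOnInterval_deriv hV x y)).sub
      ((hu.absolutelyContinuousOnInterval_deriv hV x y).smul
        hv.1.contDiffOn.absolutelyContinuousOnInterval)
  have hderiv : ∀ᵐ t, HasDerivAt (wronskian u v) 0 t := by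
    filter_upwards [hu.ae_hasDerivAt_deriv hV, hv.ae_hasDerivAt_deriv hV] with t hu' hv'
    refine (((hu.hasDerivAt t).mul hv').sub (hu'.mul (hv.hasDerivAt t))).congr_deriv ?_
    ring
  obtain ⟨C, hC⟩ := hac.const_of_ae_hasDerivAt_zero (hderiv.mono fun _ ht _ ↦ ht)
  rw [hC x Set.left_mem_uIcc, hC y Set.right_mem_uIcc]

protected theorem conj (hu : SolvesSchrodinger V u) :
    SolvesSchrodinger (fun x ↦ starRingEnd ℂ (V x)) (fun x ↦ starRingEnd ℂ (u x)) := by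
  refine ⟨Complex.conjCLE.contDiff.comp hu.1, fun a b ↦ ?_⟩
  simp only [deriv_conj, hu.2 a b, map_add, ← map_mul, intervalIntegral.intervalIntegral_conj]

end SolvesSchrodinger

theorem SolvesSchrodinger.im_conj_mul_deriv_eq {V : ℝ → ℝ} {u : ℝ → ℂ}
    (hu : SolvesSchrodinger (fun x ↦ V x) u) (hV : LocallyIntegrable V) (x y : ℝ) :
    (starRingEnd ℂ (u x) * deriv u x).im = (starRingEnd ℂ (u y) * deriv u y).im := by
  have hVc : LocallyIntegrable (fun x ↦ (V x : ℂ)) := fun t ↦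
    let ⟨s, hs, hVs⟩ := hV t
    ⟨s, hs, hVs.ofReal⟩
  have hconj : SolvesSchrodinger (fun x ↦ V x) (fun x ↦ starRingEnd ℂ (u x)) := by
    simpa only [Complex.conj_ofReal] using hu.conj
  have hW := hconj.wronskian_eq hu hVc x y
  rw [wronskian_conj_self, wronskian_conj_self] at hW
  exact mul_left_cancel₀ two_ne_zero
    (Complex.ofReal_injective (mul_right_cancel₀ Complex.I_ne_zero hW))

theorem SolvesHelmholtz.solvesSchrodinger {c : ℝ → ℝ} {k : ℝ} {u : ℝ → ℂ}
    (hu : SolvesHelmholtz c k u) :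
    SolvesSchrodinger (fun x ↦ ((-(k ^ 2 / c x ^ 2) : ℝ) : ℂ)) u := by
  simpa [SolvesSchrodinger, SolvesHelmholtz] using hu

theorem locallyIntegrable_neg_sq_div_sq {c : ℝ → ℝ} {c₀ : ℝ} (hc : AEMeasurable c) (hc₀ : 0 < c₀)
    (hle : ∀ᵐ x, c₀ ≤ c x) (k : ℝ) : LocallyIntegrable (fun x ↦ -(k ^ 2 / c x ^ 2)) := by
  refine (memLp_top_of_bound (AEMeasurable.aestronglyMeasurable (by fun_prop))
    (k ^ 2 / c₀ ^ 2) ?_).locallyIntegrable le_top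
  filter_upwards [hle] with x hx
  rw [norm_neg, Real.norm_of_nonneg (by positivity)]
  gcongr

theorem re_w_eq_inv_norm_sq_general {V : ℝ → ℝ} (hV : LocallyIntegrable V) {k : ℝ} (hk : k ≠ 0)
    {u : ℝ → ℂ} (hu : SolvesSchrodinger (fun x ↦ V x) u)
    (hlim : Tendsto (fun x : ℝ ↦ Complex.exp (-(Complex.I * k * x)) * u x) atTop (𝓝 1)) (x : ℝ) :
    (deriv u x / (Complex.I * k * u x)).re = 1 / ‖u x‖ ^ 2 := by
  have hW : (starRingEnd ℂ (u x) * deriv u x).im = k := by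
    simpa using im_conj_mul_deriv_eq_of_tendsto one_ne_zero (.of_forall hu.hasDerivAt)
      (.of_forall fun y ↦ hu.im_conj_mul_deriv_eq hV y x) hlim
  have hre : (deriv u x / (Complex.I * k * u x)).re = (deriv u x / u x).im / k := by
    have hdiv : deriv u x / (Complex.I * k * u x) = deriv u x / u x / Complex.I / k := by ring
    rw [hdiv, Complex.div_ofReal_re, Complex.div_I, Complex.neg_re, Complex.mul_I_re, neg_neg]
  rw [hre, im_div_eq_im_conj_mul_div_norm_sq, hW, div_right_comm, div_self hk]

/-- For real `k ≠ 0`, `Re(u₁'/(ik u₁)) = 1/|u₁|²`. -/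
theorem re_w_eq_inv_norm_sq (c : ℝ → ℝ) (hmeas : Measurable c)
    (h1 : HypH1 c) (h2 : HypH2 c) (k : ℝ) (hk : k ≠ 0)
    (u₁ : ℝ → ℂ) (hu : IsJostPlus c (k : ℂ) u₁) (hne : ∀ x : ℝ, u₁ x ≠ 0) :
    ∀ x : ℝ, (deriv u₁ x / (Complex.I * (k : ℂ) * u₁ x)).re = 1 / ‖u₁ x‖ ^ 2 := by
  obtain ⟨c₀, hc₀, _, _, hc⟩ := h1
  exact re_w_eq_inv_norm_sq_general
    (locallyIntegrable_neg_sq_div_sq hmeas.aemeasurable hc₀ (hc.mono fun _ hx ↦ hx.1.le) k) hk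
    hu.1.solvesSchrodinger hu.2
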